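/- Let R, r, a > 0 with R > r + a (so the circle of radius r centered at (a,0) lies inside the circle of radius R centered at the origin). Set b = R² + r² − a², λ1 = 1, λ2 = (b + √(b² − 4r²R²))/(2R²), λ3 = (b − √(b² − 4r²R²))/(2R²), e = √((λ1−λ2)/(λ1−λ3)), and let ρ = F(arcsin √(1−λ3), e)/(2K(e)) be the rotation number of the corresponding Poncelet (bicentric polygon) map. Then: (1) ρ = 1/4 if and only if 1/(R−a)² + 1/(R+a)² = 1/r² (Fuss's condition for bicentric quadrilaterals); (2) ρ = 1/3 if and only if 1/(R−a) + 1/(R+a) = 1/r (the Chapple–Euler condition for bicentric triangles). -/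

import Mathlib

open Real

/-- Incomplete elliptic integral of the first kind `F(φ,e)`. -/
noncomputable def ellF (φ e : ℝ) : ℝ :=
  ∫ τ in (0:ℝ)..φ, 1 / Real.sqrt (1 - e ^ 2 * Real.sin τ ^ 2)

/-- Complete elliptic integral of the first kind `K(e)`. -/
noncomputable def ellK (e : ℝ) : ℝ := ellF (Real.pi / 2) e

/-!
Write `Δ(x) = √(1 - e² sin² x)`. The duplication formula for the elliptic integral is
`F(2 arctan (tan x · Δ(x))) = 2 F(x)`, and `F(π - x) = 2K - F(x)`. Since `F` is strictly increasing,
`ρ = F(x) / 2K` equals `1/4` iff the doubled amplitude is `π / 2`, and `1/3` iff it is `π - x`; both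
are algebraic conditions on `sin x`, `cos x` and `Δ(x)`. At the amplitude of the rotation number,
`cos² x = λ₃ / λ₁` and `Δ(x)² = λ₂ / λ₁`, and the conditions become
`1/λ₁ + 1/λ₂ = 1/λ₃` and `1/√λ₁ + 1/√λ₂ = 1/√λ₃`. For two circles, `λ₁ = 1` and Vieta's formulas
for `λ₂`, `λ₃` turn these into Fuss's and Chapple–Euler's conditions.
-/

section HalfAngle

variable {x y t : ℝ}

lemma two_mul_arctan_eq_iff (hy : y ∈ Set.Ioo (-π) π) : 2 * arctan t = y ↔ t = tan (y / 2) := by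
  have harctan : arctan (tan (y / 2)) = y / 2 :=
    arctan_tan (by linarith [hy.1]) (by linarith [hy.2])
  rw [← arctan_injective.eq_iff (a := t), harctan, eq_div_iff two_ne_zero, mul_comm]

lemma sin_two_mul_arctan (t : ℝ) : sin (2 * arctan t) = 2 * t / (1 + t ^ 2) := by
  rw [sin_eq_two_mul_tan_half_div_one_add_tan_half_sq, mul_div_cancel_left₀ _ two_ne_zero,
    tan_arctan]

lemma tan_half_mul_sin (hx : cos (x / 2) ≠ 0) : tan (x / 2) * sin x = 1 - cos x := by
  obtain ⟨y, rfl⟩ : ∃ y, x = 2 * y := ⟨x / 2, by ring⟩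
  rw [mul_div_cancel_left₀ _ two_ne_zero] at hx ⊢
  rw [tan_eq_sin_div_cos, sin_two_mul, cos_two_mul']
  field_simp
  linear_combination sin_sq_add_cos_sq y

end HalfAngle

/-- The delta amplitude `Δ(x) = √(1 - e² sin² x)`, whose reciprocal is the integrand of `ellF`. -/
noncomputable def ellDelta (e x : ℝ) : ℝ := √(1 - e ^ 2 * sin x ^ 2)

/-- The amplitude at which `ellF` takes twice the value it takes at `x`, for `|x| < π / 2`. -/
noncomputable def doubledAmplitude (e x : ℝ) : ℝ := 2 * arctan (tan x * ellDelta e x)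

section EllipticIntegral

variable {e x : ℝ}

lemma one_sub_sq_mul_sin_sq_pos (he : e ^ 2 < 1) (x : ℝ) : 0 < 1 - e ^ 2 * sin x ^ 2 :=
  sub_pos.2 ((mul_le_of_le_one_right (sq_nonneg e) (sin_sq_le_one x)).trans_lt he)

lemma ellDelta_pos (he : e ^ 2 < 1) (x : ℝ) : 0 < ellDelta e x :=
  sqrt_pos.2 (one_sub_sq_mul_sin_sq_pos he x)

lemma ellDelta_sq (he : e ^ 2 < 1) (x : ℝ) : ellDelta e x ^ 2 = 1 - e ^ 2 * sin x ^ 2 :=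
  sq_sqrt (one_sub_sq_mul_sin_sq_pos he x).le

lemma ellDelta_pi_sub (e x : ℝ) : ellDelta e (π - x) = ellDelta e x := by
  rw [ellDelta, ellDelta, sin_pi_sub]

lemma continuous_one_div_ellDelta (he : e ^ 2 < 1) : Continuous fun τ => 1 / ellDelta e τ :=
  continuous_const.div (by unfold ellDelta; fun_prop) fun τ => (ellDelta_pos he τ).ne'

lemma hasDerivAt_ellDelta (he : e ^ 2 < 1) (x : ℝ) :
    HasDerivAt (ellDelta e) (-(e ^ 2 * sin x * cos x) / ellDelta e x) x := by
  have hsq : HasDerivAt (fun y => 1 - e ^ 2 * sin y ^ 2) (-(e ^ 2 * (2 * sin x * cos x))) x := by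
    simpa using (((hasDerivAt_sin x).pow 2).const_mul (e ^ 2)).const_sub 1
  refine (hsq.sqrt (one_sub_sq_mul_sin_sq_pos he x).ne').congr_deriv ?_
  rw [← ellDelta]
  field_simp

lemma ellF_zero (e : ℝ) : ellF 0 e = 0 := intervalIntegral.integral_same

lemma hasDerivAt_ellF (he : e ^ 2 < 1) (x : ℝ) :
    HasDerivAt (fun φ => ellF φ e) (1 / ellDelta e x) x :=
  ((continuous_one_div_ellDelta he).integral_hasStrictDerivAt 0 x).hasDerivAt

lemma strictMono_ellF (he : e ^ 2 < 1) : StrictMono fun φ => ellF φ e :=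
  strictMono_of_hasDerivAt_pos (hasDerivAt_ellF he) fun x => one_div_pos.2 (ellDelta_pos he x)

lemma ellK_pos (he : e ^ 2 < 1) : 0 < ellK e := by
  simpa only [ellF_zero, ellK] using strictMono_ellF he pi_div_two_pos

lemma ellF_pi_sub_add_ellF (he : e ^ 2 < 1) (x : ℝ) : ellF (π - x) e + ellF x e = ellF π e := by
  have hint (u v : ℝ) : IntervalIntegrable (fun τ => 1 / ellDelta e τ) MeasureTheory.volume u v :=
    (continuous_one_div_ellDelta he).intervalIntegrable u v
  have hreflect : ellF (π - x) e = ∫ τ in x..π, 1 / ellDelta e τ := by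
    have h := intervalIntegral.integral_comp_sub_left (a := x) (b := π)
      (fun τ => 1 / ellDelta e τ) π
    simp only [ellDelta_pi_sub, sub_self] at h
    exact h.symm
  rw [hreflect, add_comm]
  exact intervalIntegral.integral_add_adjacent_intervals (hint 0 x) (hint x π)

lemma ellF_pi (he : e ^ 2 < 1) : ellF π e = 2 * ellK e := by
  rw [← ellF_pi_sub_add_ellF he (π / 2), sub_half, ← ellK, two_mul]

lemma ellF_pi_sub (he : e ^ 2 < 1) (x : ℝ) : ellF (π - x) e = 2 * ellK e - ellF x e := by
  rw [← ellF_pi he, ← ellF_pi_sub_add_ellF he x, add_sub_cancel_right]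

end EllipticIntegral

section Duplication

variable {e x : ℝ}

lemma one_sub_sq_mul_sin_pow_four_pos (he : e ^ 2 < 1) (x : ℝ) : 0 < 1 - e ^ 2 * sin x ^ 4 := by
  have hsin : sin x ^ 4 ≤ 1 := by nlinarith [sin_sq_le_one x, sq_nonneg (sin x)]
  exact sub_pos.2 ((mul_le_of_le_one_right (sq_nonneg e) hsin).trans_lt he)

lemma one_add_tan_mul_ellDelta_sq (he : e ^ 2 < 1) (hx : cos x ≠ 0) :
    1 + (tan x * ellDelta e x) ^ 2 = (1 - e ^ 2 * sin x ^ 4) / cos x ^ 2 := by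
  rw [mul_pow, ellDelta_sq he, tan_eq_sin_div_cos]
  field_simp
  linear_combination sin_sq_add_cos_sq x

lemma sin_doubledAmplitude (he : e ^ 2 < 1) (hx : cos x ≠ 0) :
    sin (doubledAmplitude e x) =
      2 * sin x * cos x * ellDelta e x / (1 - e ^ 2 * sin x ^ 4) := by
  rw [doubledAmplitude, sin_two_mul_arctan, one_add_tan_mul_ellDelta_sq he hx, tan_eq_sin_div_cos]
  field_simp

lemma ellDelta_doubledAmplitude (he : e ^ 2 < 1) (hx : cos x ≠ 0) :
    ellDelta e (doubledAmplitude e x) =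
      (ellDelta e x ^ 2 - e ^ 2 * sin x ^ 2 * cos x ^ 2) / (1 - e ^ 2 * sin x ^ 4) := by
  have hden := one_sub_sq_mul_sin_pow_four_pos he x
  have hnum : 0 ≤ ellDelta e x ^ 2 - e ^ 2 * sin x ^ 2 * cos x ^ 2 := by
    rw [ellDelta_sq he, cos_sq']
    nlinarith [mul_nonneg (sq_nonneg e) (sq_nonneg (1 - sin x ^ 2))]
  rw [ellDelta, sin_doubledAmplitude he hx, ← sqrt_sq (div_nonneg hnum hden.le)]
  congr 1
  field_simp
  rw [ellDelta_sq he, cos_sq']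
  ring

lemma hasDerivAt_doubledAmplitude (he : e ^ 2 < 1) (hx : cos x ≠ 0) :
    HasDerivAt (doubledAmplitude e)
      (2 * ellDelta e (doubledAmplitude e x) / ellDelta e x) x := by
  refine (((hasDerivAt_tan hx).mul (hasDerivAt_ellDelta he x)).arctan.const_mul 2).congr_deriv ?_
  rw [Pi.mul_apply, one_add_tan_mul_ellDelta_sq he hx, ellDelta_doubledAmplitude he hx,
    tan_eq_sin_div_cos]
  field_simp
  ring

theorem ellF_doubledAmplitude (he : e ^ 2 < 1) (hx : x ∈ Set.Ioo (-(π / 2)) (π / 2)) :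
    ellF (doubledAmplitude e x) e = 2 * ellF x e := by
  have hderiv : ∀ y ∈ Set.Ioo (-(π / 2)) (π / 2),
      HasDerivAt (fun y => ellF (doubledAmplitude e y) e - 2 * ellF y e) 0 y := fun y hy => by
    have hψ := hasDerivAt_doubledAmplitude he (cos_pos_of_mem_Ioo hy).ne'
    refine (((hasDerivAt_ellF he _).comp y hψ).sub
      ((hasDerivAt_ellF he y).const_mul 2)).congr_deriv ?_
    have := (ellDelta_pos he (doubledAmplitude e y)).ne'
    field_simp
    ring
  have hconst := isOpen_Ioo.is_const_of_deriv_eq_zero isPreconnected_Ioo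
    (fun y hy => (hderiv y hy).differentiableAt.differentiableWithinAt)
    (fun y hy => (hderiv y hy).deriv) hx
    (show (0 : ℝ) ∈ Set.Ioo (-(π / 2)) (π / 2) by constructor <;> linarith [pi_pos])
  have hzero : doubledAmplitude e 0 = 0 := by simp [doubledAmplitude]
  simpa only [hzero, ellF_zero, mul_zero, sub_self, sub_eq_zero] using hconst

theorem ellF_div_two_mul_ellK_eq_one_fourth_iff (he : e ^ 2 < 1)
    (hx : x ∈ Set.Ioo (-(π / 2)) (π / 2)) :
    ellF x e / (2 * ellK e) = 1 / 4 ↔ sin x * ellDelta e x = cos x := by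
  have hK := ellK_pos he
  calc ellF x e / (2 * ellK e) = 1 / 4
      ↔ 2 * ellF x e = ellK e := by
        rw [div_eq_div_iff (by positivity) (by norm_num)]
        constructor <;> intro h <;> linarith
    _ ↔ doubledAmplitude e x = π / 2 := by
        rw [← ellF_doubledAmplitude he hx, ellK, (strictMono_ellF he).injective.eq_iff]
    _ ↔ tan x * ellDelta e x = 1 := by
        rw [doubledAmplitude, two_mul_arctan_eq_iff (by constructor <;> linarith [pi_pos]),
          div_div, show (2 * 2 : ℝ) = 4 by norm_num, tan_pi_div_four]
    _ ↔ sin x * ellDelta e x = cos x := by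
        rw [tan_eq_sin_div_cos, div_mul_eq_mul_div,
          div_eq_one_iff_eq (cos_pos_of_mem_Ioo hx).ne']

theorem ellF_div_two_mul_ellK_eq_one_third_iff (he : e ^ 2 < 1) (hx : x ∈ Set.Ioo 0 (π / 2)) :
    ellF x e / (2 * ellK e) = 1 / 3 ↔ (1 - cos x) * ellDelta e x = cos x := by
  obtain ⟨hx0, hx1⟩ := hx
  have hK := ellK_pos he
  have hcos : cos x ≠ 0 := (cos_pos_of_mem_Ioo ⟨by linarith, hx1⟩).ne'
  have hcos_half : cos (x / 2) ≠ 0 := (cos_pos_of_mem_Ioo ⟨by linarith, by linarith⟩).ne'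
  have htan_half : tan (x / 2) ≠ 0 :=
    (tan_pos_of_pos_of_lt_pi_div_two (by linarith) (by linarith)).ne'
  calc ellF x e / (2 * ellK e) = 1 / 3
      ↔ 2 * ellF x e = ellF (π - x) e := by
        rw [div_eq_div_iff (by positivity) (by norm_num), ellF_pi_sub he]
        constructor <;> intro h <;> linarith
    _ ↔ doubledAmplitude e x = π - x := by
        rw [← ellF_doubledAmplitude he ⟨by linarith, hx1⟩, (strictMono_ellF he).injective.eq_iff]
    _ ↔ tan x * ellDelta e x = (tan (x / 2))⁻¹ := by
        rw [doubledAmplitude, two_mul_arctan_eq_iff (by constructor <;> linarith), sub_div,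
          tan_pi_div_two_sub]
    _ ↔ tan (x / 2) * sin x * ellDelta e x = cos x := by
        rw [tan_eq_sin_div_cos x]
        field_simp
    _ ↔ (1 - cos x) * ellDelta e x = cos x := by rw [tan_half_mul_sin hcos_half]

end Duplication

/-- The eccentricity of a pencil of nested conics with eigenvalues `l₁ ≥ l₂ > l₃ > 0`. -/
noncomputable def pencilEccentricity (l₁ l₂ l₃ : ℝ) : ℝ := √((l₁ - l₂) / (l₁ - l₃))

/-- The amplitude at which the elliptic integral gives the Poncelet rotation number of a pencil with
largest eigenvalue `l₁` and smallest eigenvalue `l₃ > 0`, for the inner conic `ν = (0, 1)`. -/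
noncomputable def pencilAmplitude (l₁ l₃ : ℝ) : ℝ := arcsin √((l₁ - l₃) / l₁)

/-- The rotation number of the Poncelet map of a pencil with eigenvalues `l₁ ≥ l₂ > l₃ > 0`, for the
inner conic `ν = (0, 1)`. -/
noncomputable def ponceletRotationNumber (l₁ l₂ l₃ : ℝ) : ℝ :=
  ellF (pencilAmplitude l₁ l₃) (pencilEccentricity l₁ l₂ l₃) /
    (2 * ellK (pencilEccentricity l₁ l₂ l₃))

section Pencil

variable {l₁ l₂ l₃ : ℝ}

lemma pencilEccentricity_sq (h₃₁ : l₃ ≤ l₁) (h₂₁ : l₂ ≤ l₁) :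
    pencilEccentricity l₁ l₂ l₃ ^ 2 = (l₁ - l₂) / (l₁ - l₃) :=
  sq_sqrt (div_nonneg (sub_nonneg.2 h₂₁) (sub_nonneg.2 h₃₁))

lemma pencilEccentricity_sq_lt_one (h₃₂ : l₃ < l₂) (h₂₁ : l₂ ≤ l₁) :
    pencilEccentricity l₁ l₂ l₃ ^ 2 < 1 := by
  rw [pencilEccentricity_sq (h₃₂.le.trans h₂₁) h₂₁, div_lt_one (by linarith)]
  linarith

lemma pencilAmplitude_mem_Ioo (h₃ : 0 < l₃) (h₃₁ : l₃ < l₁) :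
    pencilAmplitude l₁ l₃ ∈ Set.Ioo 0 (π / 2) := by
  have h₁ : 0 < l₁ := h₃.trans h₃₁
  constructor
  · exact arcsin_pos.2 (sqrt_pos.2 (div_pos (sub_pos.2 h₃₁) h₁))
  · rw [pencilAmplitude, arcsin_lt_pi_div_two, sqrt_lt' one_pos, one_pow, div_lt_one h₁]
    linarith

lemma sin_pencilAmplitude (h₃ : 0 ≤ l₃) (h₁ : 0 ≤ l₁) :
    sin (pencilAmplitude l₁ l₃) = √((l₁ - l₃) / l₁) := by
  refine sin_arcsin (by linarith [sqrt_nonneg ((l₁ - l₃) / l₁)]) ?_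
  exact sqrt_le_one.2 (div_le_one_of_le₀ (by linarith) h₁)

lemma cos_pencilAmplitude (h₁ : 0 < l₁) (h₃₁ : l₃ ≤ l₁) :
    cos (pencilAmplitude l₁ l₃) = √(l₃ / l₁) := by
  rw [pencilAmplitude, cos_arcsin, sq_sqrt (div_nonneg (sub_nonneg.2 h₃₁) h₁.le), sub_div,
    div_self h₁.ne', sub_sub_cancel]

lemma ellDelta_pencilAmplitude (h₃ : 0 ≤ l₃) (h₃₁ : l₃ < l₁) (h₂₁ : l₂ ≤ l₁) :
    ellDelta (pencilEccentricity l₁ l₂ l₃) (pencilAmplitude l₁ l₃) = √(l₂ / l₁) := by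
  have h₁ : 0 < l₁ := h₃.trans_lt h₃₁
  have h₁₃ : 0 < l₁ - l₃ := sub_pos.2 h₃₁
  rw [ellDelta, sin_pencilAmplitude h₃ h₁.le, sq_sqrt (by positivity),
    pencilEccentricity_sq h₃₁.le h₂₁]
  congr 1
  field_simp
  ring

theorem ponceletRotationNumber_eq_one_fourth_iff (h₃ : 0 < l₃) (h₃₂ : l₃ < l₂) (h₂₁ : l₂ ≤ l₁) :
    ponceletRotationNumber l₁ l₂ l₃ = 1 / 4 ↔ 1 / l₁ + 1 / l₂ = 1 / l₃ := by
  have h₃₁ : l₃ < l₁ := h₃₂.trans_le h₂₁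
  have h₁ : 0 < l₁ := h₃.trans h₃₁
  have h₂ : 0 < l₂ := h₃.trans h₃₂
  have hx := pencilAmplitude_mem_Ioo h₃ h₃₁
  rw [ponceletRotationNumber, ellF_div_two_mul_ellK_eq_one_fourth_iff
      (pencilEccentricity_sq_lt_one h₃₂ h₂₁) ⟨by linarith [hx.1, pi_pos], hx.2⟩,
    sin_pencilAmplitude h₃.le h₁.le, cos_pencilAmplitude h₁ h₃₁.le,
    ellDelta_pencilAmplitude h₃.le h₃₁ h₂₁, ← sqrt_mul (by positivity),
    sqrt_inj (by positivity) (by positivity)]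
  field_simp
  constructor <;> intro h <;> linarith

theorem ponceletRotationNumber_eq_one_third_iff (h₃ : 0 < l₃) (h₃₂ : l₃ < l₂) (h₂₁ : l₂ ≤ l₁) :
    ponceletRotationNumber l₁ l₂ l₃ = 1 / 3 ↔ 1 / √l₁ + 1 / √l₂ = 1 / √l₃ := by
  have h₃₁ : l₃ < l₁ := h₃₂.trans_le h₂₁
  have h₁ : 0 < l₁ := h₃.trans h₃₁
  have h₂ : 0 < l₂ := h₃.trans h₃₂
  rw [ponceletRotationNumber, ellF_div_two_mul_ellK_eq_one_third_iff
      (pencilEccentricity_sq_lt_one h₃₂ h₂₁) (pencilAmplitude_mem_Ioo h₃ h₃₁),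
    cos_pencilAmplitude h₁ h₃₁.le, ellDelta_pencilAmplitude h₃.le h₃₁ h₂₁,
    sqrt_div h₃.le, sqrt_div h₂.le]
  field_simp
  constructor <;> intro h <;> linarith

end Pencil

/-- The discriminant of `R² x² - (R² + r² - a²) x + r²`. With `C` and `D` the matrices of the
circles `(X - a)² + Y² = r²` and `X² + Y² = R²`, normalized to have unit coefficient of `X²`, one
has `det (C - x D) = (x - 1) (R² x² - (R² + r² - a²) x + r²)`. -/
noncomputable def bicentricDiscrim (R r a : ℝ) : ℝ :=
  (R ^ 2 + r ^ 2 - a ^ 2) ^ 2 - 4 * r ^ 2 * R ^ 2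

/-- The middle eigenvalue of the pencil of two nested circles, namely the larger root of
`R² x² - (R² + r² - a²) x + r²`; the largest eigenvalue is `1`. -/
noncomputable def bicentricEigenvalue₂ (R r a : ℝ) : ℝ :=
  (R ^ 2 + r ^ 2 - a ^ 2 + √(bicentricDiscrim R r a)) / (2 * R ^ 2)

/-- The smallest eigenvalue of the pencil of two nested circles, namely the smaller root of
`R² x² - (R² + r² - a²) x + r²`. -/
noncomputable def bicentricEigenvalue₃ (R r a : ℝ) : ℝ :=
  (R ^ 2 + r ^ 2 - a ^ 2 - √(bicentricDiscrim R r a)) / (2 * R ^ 2)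

section Bicentric

variable {R r a : ℝ}

lemma bicentricEigenvalue₂_add_bicentricEigenvalue₃ (R r a : ℝ) :
    bicentricEigenvalue₂ R r a + bicentricEigenvalue₃ R r a =
      (R ^ 2 + r ^ 2 - a ^ 2) / R ^ 2 := by
  rw [bicentricEigenvalue₂, bicentricEigenvalue₃]
  ring

lemma bicentricEigenvalue₂_sub_bicentricEigenvalue₃ (R r a : ℝ) :
    bicentricEigenvalue₂ R r a - bicentricEigenvalue₃ R r a =
      √(bicentricDiscrim R r a) / R ^ 2 := by
  rw [bicentricEigenvalue₂, bicentricEigenvalue₃]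
  ring

lemma bicentricEigenvalue₂_mul_bicentricEigenvalue₃ (hR : R ≠ 0) (hD : 0 ≤ bicentricDiscrim R r a) :
    bicentricEigenvalue₂ R r a * bicentricEigenvalue₃ R r a = (r / R) ^ 2 := by
  have hsqrt : √(bicentricDiscrim R r a) ^ 2 =
      (R ^ 2 + r ^ 2 - a ^ 2) ^ 2 - 4 * r ^ 2 * R ^ 2 := sq_sqrt hD
  rw [bicentricEigenvalue₂, bicentricEigenvalue₃]
  field_simp
  linear_combination -hsqrt

lemma sq_lt_sub_sq (hin : r + |a| < R) : a ^ 2 < (R - r) ^ 2 :=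
  sq_lt_sq.2 (by rw [lt_abs]; left; linarith)

lemma bicentricDiscrim_pos (hr : 0 ≤ r) (hin : r + |a| < R) : 0 < bicentricDiscrim R r a := by
  have hsub := sq_lt_sub_sq hin
  have hR : 0 < R := by linarith [abs_nonneg a]
  calc 0 < ((R - r) ^ 2 - a ^ 2) * ((R + r) ^ 2 - a ^ 2) :=
        mul_pos (by linarith) (by nlinarith)
    _ = bicentricDiscrim R r a := by rw [bicentricDiscrim]; ring

lemma bicentricEigenvalue₃_pos (hr : 0 < r) (hin : r + |a| < R) :
    0 < bicentricEigenvalue₃ R r a := by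
  have hR : 0 < R := by linarith [abs_nonneg a]
  have hb : 0 < R ^ 2 + r ^ 2 - a ^ 2 := by nlinarith [sq_lt_sub_sq hin, mul_pos hr hR]
  refine div_pos (sub_pos.2 ?_) (by positivity)
  rw [sqrt_lt' hb, bicentricDiscrim]
  linarith [show 0 < 4 * r ^ 2 * R ^ 2 by positivity]

lemma bicentricEigenvalue₃_lt_bicentricEigenvalue₂ (hr : 0 ≤ r) (hin : r + |a| < R) :
    bicentricEigenvalue₃ R r a < bicentricEigenvalue₂ R r a := by
  have hR : 0 < R := by linarith [abs_nonneg a]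
  have hD := bicentricDiscrim_pos hr hin
  rw [← sub_pos, bicentricEigenvalue₂_sub_bicentricEigenvalue₃]
  positivity

lemma bicentricEigenvalue₂_le_one (hr : 0 ≤ r) (hrR : r ≤ R) : bicentricEigenvalue₂ R r a ≤ 1 := by
  have hsqrt : √(bicentricDiscrim R r a) ≤ 2 * R ^ 2 - (R ^ 2 + r ^ 2 - a ^ 2) := by
    rw [sqrt_le_iff, bicentricDiscrim]
    constructor
    · nlinarith
    · linarith [sq_nonneg (R * a)]
  exact div_le_one_of_le₀ (by linarith) (by positivity)

theorem one_add_one_div_bicentricEigenvalue₂_eq_iff (hr : 0 < r) (hin : r + |a| < R) :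
    1 + 1 / bicentricEigenvalue₂ R r a = 1 / bicentricEigenvalue₃ R r a ↔
      1 / (R - a) ^ 2 + 1 / (R + a) ^ 2 = 1 / r ^ 2 := by
  have hR : 0 < R := by linarith [abs_nonneg a]
  have hsub : 0 < R - a := by linarith [le_abs_self a]
  have hadd : 0 < R + a := by linarith [neg_abs_le a]
  have hD := bicentricDiscrim_pos hr.le hin
  have h₃ := bicentricEigenvalue₃_pos hr hin
  have h₂ := h₃.trans (bicentricEigenvalue₃_lt_bicentricEigenvalue₂ hr.le hin)
  calc 1 + 1 / bicentricEigenvalue₂ R r a = 1 / bicentricEigenvalue₃ R r a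
      ↔ bicentricEigenvalue₂ R r a - bicentricEigenvalue₃ R r a =
          bicentricEigenvalue₂ R r a * bicentricEigenvalue₃ R r a := by
        field_simp
        constructor <;> intro h <;> linarith
    _ ↔ √(bicentricDiscrim R r a) = r ^ 2 := by
        rw [bicentricEigenvalue₂_sub_bicentricEigenvalue₃,
          bicentricEigenvalue₂_mul_bicentricEigenvalue₃ hR.ne' hD.le, div_pow,
          div_left_inj' (by positivity)]
    _ ↔ bicentricDiscrim R r a = (r ^ 2) ^ 2 := sqrt_eq_iff_eq_sq hD.le (by positivity)
    _ ↔ 1 / (R - a) ^ 2 + 1 / (R + a) ^ 2 = 1 / r ^ 2 := by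
        rw [bicentricDiscrim]
        field_simp
        constructor <;> intro h <;> linarith

theorem one_add_one_div_sqrt_bicentricEigenvalue₂_eq_iff (hr : 0 < r) (hin : r + |a| < R) :
    1 + 1 / √(bicentricEigenvalue₂ R r a) = 1 / √(bicentricEigenvalue₃ R r a) ↔
      1 / (R - a) + 1 / (R + a) = 1 / r := by
  have hR : 0 < R := by linarith [abs_nonneg a]
  have hsub : 0 < R - a := by linarith [le_abs_self a]
  have hadd : 0 < R + a := by linarith [neg_abs_le a]
  have hlt := bicentricEigenvalue₃_lt_bicentricEigenvalue₂ hr.le hin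
  have h₃ := bicentricEigenvalue₃_pos hr hin
  have h₂ := h₃.trans hlt
  have hsum := bicentricEigenvalue₂_add_bicentricEigenvalue₃ R r a
  have hprod : √(bicentricEigenvalue₂ R r a) * √(bicentricEigenvalue₃ R r a) = r / R := by
    rw [← sqrt_mul h₂.le, bicentricEigenvalue₂_mul_bicentricEigenvalue₃ hR.ne'
      (bicentricDiscrim_pos hr.le hin).le, sqrt_sq (by positivity)]
  have hsq : (√(bicentricEigenvalue₂ R r a) - √(bicentricEigenvalue₃ R r a)) ^ 2 =
      (R ^ 2 + r ^ 2 - a ^ 2) / R ^ 2 - 2 * (r / R) := by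
    rw [sub_sq, sq_sqrt h₂.le, sq_sqrt h₃.le, mul_assoc, hprod, ← hsum]
    ring
  calc 1 + 1 / √(bicentricEigenvalue₂ R r a) = 1 / √(bicentricEigenvalue₃ R r a)
      ↔ √(bicentricEigenvalue₂ R r a) - √(bicentricEigenvalue₃ R r a) = r / R := by
        rw [← hprod]
        field_simp
        constructor <;> intro h <;> linarith
    _ ↔ (R ^ 2 + r ^ 2 - a ^ 2) / R ^ 2 - 2 * (r / R) = (r / R) ^ 2 := by
        rw [← hsq, sq_eq_sq₀ (sub_nonneg.2 (sqrt_le_sqrt hlt.le)) (by positivity)]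
    _ ↔ 1 / (R - a) + 1 / (R + a) = 1 / r := by
        field_simp
        constructor <;> intro h <;> linarith

end Bicentric

/-- Fuss's condition (bicentric quadrilaterals, rotation number 1/4)
and the Chapple–Euler condition (bicentric triangles, rotation number 1/3) for a
circle of radius `r` centered at `(a,0)` inside a circle of radius `R` centered at
the origin. -/
theorem fuss_and_chapple_euler (R r a : ℝ)
    (hR : 0 < R) (hr : 0 < r) (ha : 0 < a) (hin : r + a < R) :
    let b := R ^ 2 + r ^ 2 - a ^ 2
    let l2 := (b + Real.sqrt (b ^ 2 - 4 * r ^ 2 * R ^ 2)) / (2 * R ^ 2)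
    let l3 := (b - Real.sqrt (b ^ 2 - 4 * r ^ 2 * R ^ 2)) / (2 * R ^ 2)
    let e := Real.sqrt ((1 - l2) / (1 - l3))
    let ρ := ellF (Real.arcsin (Real.sqrt (1 - l3))) e / (2 * ellK e)
    (ρ = 1 / 4 ↔ 1 / (R - a) ^ 2 + 1 / (R + a) ^ 2 = 1 / r ^ 2) ∧
    (ρ = 1 / 3 ↔ 1 / (R - a) + 1 / (R + a) = 1 / r) := by
  intro b l2 l3 e ρ
  replace hin : r + |a| < R := by rwa [abs_of_pos ha]
  have hρ : ρ = ponceletRotationNumber 1 (bicentricEigenvalue₂ R r a)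
      (bicentricEigenvalue₃ R r a) := by
    simp only [ponceletRotationNumber, pencilAmplitude, div_one]
    rfl
  have h₃ := bicentricEigenvalue₃_pos hr hin
  have h₃₂ := bicentricEigenvalue₃_lt_bicentricEigenvalue₂ hr.le hin
  have h₂₁ := bicentricEigenvalue₂_le_one (a := a) hr.le (by linarith [abs_nonneg a] : r ≤ R)
  rw [hρ, ponceletRotationNumber_eq_one_fourth_iff h₃ h₃₂ h₂₁,
    ponceletRotationNumber_eq_one_third_iff h₃ h₃₂ h₂₁, sqrt_one, div_one]
  exact ⟨one_add_one_div_bicentricEigenvalue₂_eq_iff hr hin,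
    one_add_one_div_sqrt_bicentricEigenvalue₂_eq_iff hr hin⟩
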